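/- arXiv:1803.11073 — 2 statements merged into one kernel-verified Lean document; each statement's English description precedes it below -/
import Mathlib

section
/- Let X be an infinite separable locally compact metric space, let f : X → X be a continuous weakly mixing map with a fixed point, let β denote the diameter of X (β = ∞ if X is unbounded), and let δ = inf_{n≥1} sup_{x∈X} ρ(fⁿ(x), x). Then there exist countably infinitely many pairwise disjoint Cantor sets S⁽¹⁾, S⁽²⁾, S⁽³⁾, … of totally transitive points of f whose union S = ⋃_{j≥1} S⁽ʲ⁾ is dense in X and is a β-scrambled set of fⁿ for every n ≥ 1, and such that the set Ŝ = ⋃_{i≥0} fⁱ(S) is dense in X, invariant under f (f(Ŝ) ⊆ Ŝ), and is a δ-scrambled set of fⁿ for every n ≥ 1: for all distinct c, d ∈ Ŝ and every n ≥ 1, liminf_{k→∞} ρ(f^{nk}(c), f^{nk}(d)) = 0 and limsup_{k→∞} ρ(f^{nk}(c), f^{nk}(d)) ≥ δ. -/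
open Filter ENNReal

/-- `f` is (topologically) weakly mixing. -/
def WeaklyMixing {X : Type*} [TopologicalSpace X] (f : X → X) : Prop :=
  ∀ U₁ U₂ V₁ V₂ : Set X, IsOpen U₁ → IsOpen U₂ → IsOpen V₁ → IsOpen V₂ →
    U₁.Nonempty → U₂.Nonempty → V₁.Nonempty → V₂.Nonempty →
    ∃ n : ℕ, 1 ≤ n ∧ (f^[n] '' U₁ ∩ V₁).Nonempty ∧ (f^[n] '' U₂ ∩ V₂).Nonempty

/-- A Cantor set: a nonempty compact, perfect, totally disconnected subset. -/
def IsCantorSet {X : Type*} [TopologicalSpace X] (C : Set X) : Prop :=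
  C.Nonempty ∧ IsCompact C ∧ Perfect C ∧ IsTotallyDisconnected C

/-- `x` is a totally transitive point of `g`. -/
def TotallyTransitivePoint {Y : Type*} [TopologicalSpace Y] (g : Y → Y) (x : Y) : Prop :=
  ∀ k : ℕ, 1 ≤ k → Dense (Set.range fun m : ℕ => g^[k * m] x)

/-!
Call `m` a hitting time of `(U, V)` if the `m`-th iterate of `U` meets `V`. By Furstenberg's
intersection lemma, weak mixing provides, for finitely many pairs, a single pair all of whose
hitting times are hitting times of each of them; applied to the pairs `(U, f⁻ⁱ V)`, this gives
arbitrarily long runs of consecutive hitting times common to two given pairs, hence a common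
multiple of any given `n`. So every power of `f × f` is transitive, and by Baire the pairs that are
totally transitive for `f × f` are residual in `X × X`.

Mycielski's theorem then yields Cantor sets with dense union, any two points `a ≠ b` of which form
such a pair. It is itself a Baire argument, in the space of continuous maps from `ℕ × 2^ℕ` to `X`:
a generic map has dense range, and for disjoint compact open `C`, `D` it sends `C × D` into a given
residual set, because locally constant maps with values in a dense rectangle are dense.

Along a totally transitive orbit a continuous function has limsup equal to its supremum and liminf
equal to its infimum. For the distance on `X × X` and the orbit of `(fⁱ a, fʲ b)` these are the
diameter and `0`. Two iterates of a single point `a` are instead compared through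
`x ↦ edist (f^[l] x) x`, whose supremum is at least `δ` and whose infimum is `0`, attained at the
fixed point.
-/

section Polish

open Set TopologicalSpace Topology

theorem isOpen_range_of_locallyCompactSpace {X Y : Type*} [TopologicalSpace X] [TopologicalSpace Y]
    [LocallyCompactSpace X] [T2Space Y] {e : X → Y} (he : IsEmbedding e) (hd : DenseRange e) :
    IsOpen (range e) := by
  rw [isOpen_iff_mem_nhds]
  rintro _ ⟨x, rfl⟩
  obtain ⟨K, hK, hxK⟩ := exists_compact_mem_nhds x
  obtain ⟨W, ⟨hxW, hW⟩, hWK⟩ := ((nhds_basis_opens (e x)).comap e).mem_iff.1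
    (he.isInducing.nhds_eq_comap x ▸ hxK)
  have hWeK : W ∩ range e ⊆ e '' K := by
    rintro _ ⟨hy, y, rfl⟩
    exact mem_image_of_mem e (hWK hy)
  have heK : IsClosed (e '' K) := (hK.image he.continuous).isClosed
  refine mem_of_superset (hW.mem_nhds hxW) ?_
  calc W ⊆ closure (W ∩ range e) := hd.open_subset_closure_inter hW
    _ ⊆ e '' K := closure_minimal hWeK heK
    _ ⊆ range e := image_subset_range e K

theorem polishSpace_of_locallyCompactSpace {X : Type*} [MetricSpace X] [SeparableSpace X]
    [LocallyCompactSpace X] : PolishSpace X := by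
  have hemb : IsEmbedding ((↑) : X → UniformSpace.Completion X) :=
    UniformSpace.Completion.isUniformEmbedding_coe X |>.isEmbedding
  have hdense : DenseRange ((↑) : X → UniformSpace.Completion X) :=
    UniformSpace.Completion.denseRange_coe
  have : SeparableSpace (UniformSpace.Completion X) := hdense.separableSpace hemb.continuous
  have : PolishSpace (range ((↑) : X → UniformSpace.Completion X)) :=
    (isOpen_range_of_locallyCompactSpace hemb hdense).polishSpace
  exact hemb.toHomeomorph.isClosedEmbedding.polishSpace

end Polish

section CantorSets

open Set Topology

instance perfectSpace_pi {ι : Type*} [Infinite ι] {Y : ι → Type*} [∀ i, TopologicalSpace (Y i)]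
    [∀ i, Nontrivial (Y i)] : PerfectSpace (∀ i, Y i) := by
  classical
  rw [perfectSpace_iff_forall_not_isolated]
  intro x
  rw [← mem_closure_iff_nhdsWithin_neBot, mem_closure_iff]
  intro U hU hxU
  obtain ⟨I, u, hu, hIU⟩ := isOpen_pi_iff.1 hU x hxU
  obtain ⟨i, hi⟩ := Infinite.exists_notMem_finset I
  obtain ⟨y, hy⟩ := exists_ne (x i)
  refine ⟨Function.update x i y, hIU fun j hj => ?_, fun h => hy ?_⟩
  · rw [Function.update_of_ne (ne_of_mem_of_not_mem hj hi)]
    exact (hu j hj).2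
  · simpa using congrFun h i

theorem isCantorSet_range {K X : Type*} [TopologicalSpace K] [CompactSpace K] [PerfectSpace K]
    [TotallyDisconnectedSpace K] [Nonempty K] [TopologicalSpace X] [T2Space X] {φ : K → X}
    (hφ : Continuous φ) (hinj : Function.Injective φ) : IsCantorSet (range φ) := by
  have hcompact : IsCompact (range φ) := isCompact_range hφ
  refine ⟨range_nonempty φ, hcompact, ⟨hcompact.isClosed, ?_⟩,
    (hφ.isClosedEmbedding hinj).isEmbedding.isTotallyDisconnected_range.2 inferInstance⟩
  rintro _ ⟨x, rfl⟩
  rw [← image_univ, ← map_principal]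
  exact (PerfectSpace.univ_preperfect x (mem_univ x)).map hφ.continuousAt hinj

end CantorSets

section Mycielski

open Set TopologicalSpace Topology Uniformity

theorem exists_dense_prod_subset {X : Type*} [TopologicalSpace X] [SecondCountableTopology X]
    [BaireSpace X] {G : Set (X × X)} (hG : IsOpen G) (hd : Dense G) :
    ∃ D₁ D₂ : Set X, Dense D₁ ∧ Dense D₂ ∧ D₁ ×ˢ D₂ ⊆ G := by
  -- The points `x` whose slice `{y | (x, y) ∈ G}` is dense form a dense set.
  have hE : Dense (⋂ B ∈ countableBasis X, Prod.fst '' (G ∩ univ ×ˢ B)) := by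
    refine dense_biInter_of_isOpen (fun B hB => isOpenMap_fst _ (hG.inter
      (isOpen_univ.prod (isOpen_of_mem_countableBasis hB)))) (countable_countableBasis X) ?_
    refine fun B hB => dense_iff_inter_open.2 fun U hU hUn => ?_
    obtain ⟨⟨x, y⟩, ⟨hxU, hyB⟩, hxyG⟩ := hd.inter_open_nonempty (U ×ˢ B)
      (hU.prod (isOpen_of_mem_countableBasis hB)) (hUn.prod (nonempty_of_mem_countableBasis hB))
    exact ⟨x, hxU, (x, y), ⟨hxyG, trivial, hyB⟩, rfl⟩
  obtain ⟨D₁, hD₁E, hD₁c, hD₁⟩ := hE.exists_countable_dense_subset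
  refine ⟨D₁, ⋂ x ∈ D₁, Prod.mk x ⁻¹' G, hD₁, ?_, fun p hp => mem_iInter₂.1 hp.2 p.1 hp.1⟩
  refine dense_biInter_of_isOpen (fun x _ => hG.preimage (by fun_prop)) hD₁c fun x hx => ?_
  refine (isBasis_countableBasis X).dense_iff.2 fun B hB _ => ?_
  obtain ⟨⟨_, y⟩, ⟨hxyG, -, hyB⟩, rfl⟩ := mem_iInter₂.1 (hD₁E hx) B hB
  exact ⟨y, hyB, hxyG⟩

theorem exists_locallyConstant_forall_mem {K ι : Type*} [TopologicalSpace K] [LindelofSpace K]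
    (hK : IsTopologicalBasis {s : Set K | IsClopen s}) {U : ι → Set K} (hU : ∀ i, IsOpen (U i))
    (hcover : ∀ x, ∃ i, x ∈ U i) : ∃ ψ : LocallyConstant K ι, ∀ x, x ∈ U (ψ x) := by
  classical
  rcases isEmpty_or_nonempty K with _ | _
  · exact ⟨⟨isEmptyElim, IsLocallyConstant.of_discrete _⟩, isEmptyElim⟩
  choose i hi using hcover
  choose C hC hxC hCU using fun x => hK.exists_subset_of_mem_open (hi x) (hU (i x))
  obtain ⟨t, ht, htC⟩ := countable_cover_nhds fun x => (hC x).isOpen.mem_nhds (hxC x)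
  have htn : t.Nonempty := nonempty_iff_ne_empty.2 fun ht0 =>
    empty_ne_univ (by simpa [ht0] using htC)
  obtain ⟨x, rfl⟩ := ht.exists_eq_range htn
  -- Send `z` to the index of the first set of the countable clopen cover that contains it.
  have hfirst : ∀ z, ∃ n, z ∈ C (x n) := by simpa [eq_univ_iff_forall] using htC
  have hlc : IsLocallyConstant fun z => Nat.find (hfirst z) := by
    refine IsLocallyConstant.iff_isOpen_fiber.2 fun n => ?_
    have hfiber : (fun z => Nat.find (hfirst z)) ⁻¹' {n} = C (x n) ∩ ⋂ m < n, (C (x m))ᶜ := by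
      ext z; simp [Nat.find_eq_iff]
    exact hfiber ▸ (hC _).isOpen.inter
      ((finite_lt_nat n).isOpen_biInter fun m _ => (hC _).compl.isOpen)
  exact ⟨⟨_, hlc.comp fun n => i (x n)⟩, fun z => hCU _ (Nat.find_spec (hfirst z))⟩

theorem dense_continuousMap_of_forall_isCompact {K X : Type*} [TopologicalSpace K] [UniformSpace X]
    {A : Set C(K, X)}
    (h : ∀ (φ : C(K, X)) (L : Set K) (V : Set (X × X)), IsCompact L → V ∈ 𝓤 X → IsOpen V →
      ∃ ψ ∈ A, ∀ x ∈ L, (φ x, ψ x) ∈ V) : Dense A := by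
  refine fun φ => (mem_closure_iff_nhds_basis (nhds_basis_uniformity'
    ContinuousMap.hasBasis_compactConvergenceUniformity)).2 fun ⟨L, V⟩ ⟨hL, hV⟩ => ?_
  obtain ⟨ψ, hψ, hφψ⟩ := h φ L (interior V) hL (interior_mem_uniformity hV) isOpen_interior
  exact ⟨ψ, hψ, fun x hx => interior_subset (hφψ x hx)⟩

theorem isOpen_continuousMap_forall_prod_mem {K X : Type*} [TopologicalSpace K]
    [LocallyCompactSpace K] [TopologicalSpace X] {C D : Set K} (hC : IsCompact C)
    (hD : IsCompact D) {G : Set (X × X)} (hG : IsOpen G) :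
    IsOpen {φ : C(K, X) | ∀ p ∈ C, ∀ q ∈ D, (φ p, φ q) ∈ G} := by
  have hprod : Continuous fun φ : C(K, X) => φ.prodMap φ :=
    ContinuousMap.continuous_of_continuous_uncurry _ <|
      show Continuous fun x : C(K, X) × (K × K) => (x.1 x.2.1, x.1 x.2.2) by fun_prop
  convert (ContinuousMap.isOpen_setOfPred_mapsTo (hC.prod hD) hG).preimage hprod using 1
  ext φ
  exact ⟨fun h x hx => h x.1 hx.1 x.2 hx.2, fun h p hp q hq => @h (p, q) ⟨hp, hq⟩⟩

variable {K : Type*} [TopologicalSpace K] [LocallyCompactSpace K] [T2Space K]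
  [TotallyDisconnectedSpace K]

theorem isTopologicalBasis_isCompact_isClopen :
    IsTopologicalBasis {s : Set K | IsCompact s ∧ IsClopen s} := by
  refine isTopologicalBasis_of_isOpen_of_nhds (fun s hs => hs.2.isOpen) fun x U hxU hU => ?_
  obtain ⟨L, hL, hxL, hLU⟩ := exists_compact_subset hU hxU
  obtain ⟨C, hC, hxC, hCL⟩ :=
    loc_compact_Haus_tot_disc_of_zero_dim.exists_subset_of_mem_open hxL isOpen_interior
  have hCL : C ⊆ L := hCL.trans interior_subset
  exact ⟨C, ⟨hL.of_isClosed_subset hC.isClosed hCL, hC⟩, hxC, hCL.trans hLU⟩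

theorem exists_disjoint_isCompact_isClopen {p q : K} (hpq : p ≠ q) :
    ∃ C D : Set K, (IsCompact C ∧ IsClopen C) ∧ (IsCompact D ∧ IsClopen D) ∧
      (p, q) ∈ C ×ˢ D ∧ Disjoint C D := by
  obtain ⟨U, V, hU, hV, hpU, hqV, hUV⟩ := t2_separation hpq
  obtain ⟨C, hC, hpC, hCU⟩ :=
    isTopologicalBasis_isCompact_isClopen.exists_subset_of_mem_open hpU hU
  obtain ⟨D, hD, hqD, hDV⟩ :=
    isTopologicalBasis_isCompact_isClopen.exists_subset_of_mem_open hqV hV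
  exact ⟨C, D, hC, hD, ⟨hpC, hqD⟩, hUV.mono hCU hDV⟩

theorem dense_continuousMap_exists_mem [NoncompactSpace K] {X : Type*} [UniformSpace X] {B : Set X}
    (hB : B.Nonempty) : Dense {φ : C(K, X) | ∃ p, φ p ∈ B} := by
  classical
  obtain ⟨b, hb⟩ := hB
  refine dense_continuousMap_of_forall_isCompact fun φ L V hL hV _ => ?_
  have : PrespectralSpace K := .of_isTopologicalBasis
    (isTopologicalBasis_isCompact_isClopen (K := K)) fun s hs => hs.1
  obtain ⟨C, hCc, hCo, hLC, -⟩ :=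
    PrespectralSpace.exists_isCompact_and_isOpen_between hL isOpen_univ (subset_univ L)
  obtain ⟨p, hp⟩ := (ne_univ_iff_exists_notMem C).1 hCc.ne_univ
  refine ⟨⟨C.piecewise φ fun _ => b, continuous_piecewise
    (by simp [IsClopen.frontier_eq ⟨hCc.isClosed, hCo⟩]) φ.continuous.continuousOn
    continuousOn_const⟩, ⟨p, by simpa [hp] using hb⟩, fun x hx => ?_⟩
  simpa [hLC hx] using refl_mem_uniformity hV

theorem eventually_residual_continuousMap_denseRange [NoncompactSpace K] {X : Type*}
    [UniformSpace X] [SecondCountableTopology X] :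
    ∀ᶠ φ : C(K, X) in residual C(K, X), DenseRange φ := by
  have hmeet : ∀ᶠ φ : C(K, X) in residual C(K, X), ∀ B ∈ countableBasis X, ∃ p, φ p ∈ B := by
    refine (eventually_countable_ball (countable_countableBasis X)).2 fun B hB =>
      residual_of_dense_open ?_ (dense_continuousMap_exists_mem (nonempty_of_mem_countableBasis hB))
    simp only [ofPred_exists]
    exact isOpen_iUnion fun p => (isOpen_of_mem_countableBasis hB).preimage (by fun_prop)
  filter_upwards [hmeet] with φ hφ
  refine (isBasis_countableBasis X).dense_iff.2 fun B hB _ => ?_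
  obtain ⟨p, hp⟩ := hφ B hB
  exact ⟨φ p, hp, p, rfl⟩

theorem exists_locallyConstant_forall_mem_of_dense [LindelofSpace K] {X : Type*}
    [UniformSpace X] (φ : C(K, X)) {D : Set X} (hD : Dense D) {V : Set (X × X)} (hV : V ∈ 𝓤 X)
    (hVo : IsOpen V) : ∃ ψ : LocallyConstant K X, ∀ x, ψ x ∈ D ∧ (φ x, ψ x) ∈ V := by
  obtain ⟨ψ, hψ⟩ := exists_locallyConstant_forall_mem loc_compact_Haus_tot_disc_of_zero_dim
    (U := fun y : D => {x | (φ x, (y : X)) ∈ V}) (fun y => hVo.preimage (by fun_prop)) fun x => by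
      obtain ⟨y, hyV, hyD⟩ := hD.inter_open_nonempty {y | (φ x, y) ∈ V}
        (hVo.preimage (by fun_prop)) ⟨φ x, refl_mem_uniformity hV⟩
      exact ⟨⟨y, hyD⟩, hyV⟩
  exact ⟨ψ.map Subtype.val, fun x => ⟨(ψ x).2, hψ x⟩⟩

theorem dense_continuousMap_forall_prod_mem [LindelofSpace K] {X : Type*} [UniformSpace X]
    [SecondCountableTopology X] [BaireSpace X] {C D : Set K} (hC : IsClopen C)
    (hCD : Disjoint C D) {G : Set (X × X)} (hG : IsOpen G) (hd : Dense G) :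
    Dense {φ : C(K, X) | ∀ p ∈ C, ∀ q ∈ D, (φ p, φ q) ∈ G} := by
  classical
  obtain ⟨D₁, D₂, hD₁, hD₂, hDG⟩ := exists_dense_prod_subset hG hd
  refine dense_continuousMap_of_forall_isCompact fun φ _ V _ hV hVo => ?_
  obtain ⟨ψ₁, hψ₁⟩ := exists_locallyConstant_forall_mem_of_dense φ hD₁ hV hVo
  obtain ⟨ψ₂, hψ₂⟩ := exists_locallyConstant_forall_mem_of_dense φ hD₂ hV hVo
  refine ⟨⟨C.piecewise ψ₁ ψ₂, continuous_piecewise (by simp [hC.frontier_eq])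
    ψ₁.continuous.continuousOn ψ₂.continuous.continuousOn⟩, fun p hp q hq => ?_, fun x _ => ?_⟩
  · simpa [hp, hCD.notMem_of_mem_right hq] using hDG ⟨(hψ₁ p).1, (hψ₂ q).1⟩
  · by_cases hx : x ∈ C
    · simpa [hx] using (hψ₁ x).2
    · simpa [hx] using (hψ₂ x).2

theorem eventually_residual_continuousMap_forall_prod_mem [LindelofSpace K] {X : Type*}
    [UniformSpace X] [SecondCountableTopology X] [BaireSpace X] {C D : Set K} (hC : IsCompact C)
    (hCo : IsClopen C) (hD : IsCompact D) (hCD : Disjoint C D) {R : Set (X × X)}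
    (hR : R ∈ residual (X × X)) :
    ∀ᶠ φ : C(K, X) in residual C(K, X), ∀ p ∈ C, ∀ q ∈ D, (φ p, φ q) ∈ R := by
  obtain ⟨𝒢, hGo, hGd, hGc, hGR⟩ := mem_residual_iff.1 hR
  have hG : ∀ᶠ φ : C(K, X) in residual C(K, X),
      ∀ G ∈ 𝒢, ∀ p ∈ C, ∀ q ∈ D, (φ p, φ q) ∈ G :=
    (eventually_countable_ball hGc).2 fun G hG => residual_of_dense_open
      (isOpen_continuousMap_forall_prod_mem hC hD (hGo G hG))
      (dense_continuousMap_forall_prod_mem hCo hCD (hGo G hG) (hGd G hG))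
  filter_upwards [hG] with φ hφ p hp q hq using hGR fun G hG => hφ G hG p hp q hq

theorem eventually_residual_continuousMap_pairwise_mem [SecondCountableTopology K] {X : Type*}
    [UniformSpace X] [SecondCountableTopology X] [BaireSpace X] {R : Set (X × X)}
    (hR : R ∈ residual (X × X)) :
    ∀ᶠ φ : C(K, X) in residual C(K, X), Pairwise fun p q => (φ p, φ q) ∈ R := by
  choose! C D hC hD hx hCD using fun (x : K × K) (hx : x.1 ≠ x.2) =>
    exists_disjoint_isCompact_isClopen hx
  obtain ⟨t, htsub, htc, htcover⟩ := countable_cover_nhdsWithin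
    (s := {x : K × K | x.1 ≠ x.2}) (f := fun x => C x ×ˢ D x) fun x hxne =>
      mem_nhdsWithin_of_mem_nhds
        (((hC x hxne).2.isOpen.prod (hD x hxne).2.isOpen).mem_nhds (hx x hxne))
  have ht : ∀ᶠ φ : C(K, X) in residual C(K, X),
      ∀ x ∈ t, ∀ p ∈ C x, ∀ q ∈ D x, (φ p, φ q) ∈ R :=
    (eventually_countable_ball htc).2 fun x hxt =>
      eventually_residual_continuousMap_forall_prod_mem (hC x (htsub hxt)).1
        (hC x (htsub hxt)).2 (hD x (htsub hxt)).1 (hCD x (htsub hxt)) hR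
  filter_upwards [ht] with φ hφ p q hpq
  obtain ⟨x, hxt, hpC, hqD⟩ := mem_iUnion₂.1 (@htcover (p, q) hpq)
  exact hφ x hxt p hpC q hqD

theorem exists_continuousMap_denseRange_pairwise_mem [SecondCountableTopology K]
    [NoncompactSpace K] {X : Type*} [TopologicalSpace X] [PolishSpace X] [Nonempty X]
    {R : Set (X × X)} (hR : R ∈ residual (X × X)) :
    ∃ φ : C(K, X), DenseRange φ ∧ Pairwise fun p q => (φ p, φ q) ∈ R := by
  let := upgradeIsCompletelyMetrizable X
  have : Nonempty C(K, X) := ⟨.const K (Classical.arbitrary X)⟩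
  exact (dense_of_mem_residual <| eventually_residual_continuousMap_denseRange.and
    (eventually_residual_continuousMap_pairwise_mem hR)).nonempty

theorem exists_isCantorSet_pairwise_mem {X : Type*} [TopologicalSpace X] [PolishSpace X]
    [Nonempty X] {R : Set (X × X)} (hR : R ∈ residual (X × X)) (hirrefl : ∀ x, (x, x) ∉ R) :
    ∃ S : ℕ → Set X, Pairwise (Function.onFun Disjoint S) ∧ (∀ j, IsCantorSet (S j)) ∧
      Dense (⋃ j, S j) ∧ (⋃ j, S j).Pairwise fun a b => (a, b) ∈ R := by
  obtain ⟨φ, hφd, hφR⟩ :=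
    exists_continuousMap_denseRange_pairwise_mem (K := ℕ × (ℕ → Bool)) hR
  have hinj : Function.Injective φ := fun p q hpq => by
    by_contra hne
    have hR : (φ p, φ q) ∈ R := hφR hne
    exact hirrefl (φ q) (hpq ▸ hR)
  have hunion : ⋃ j, range (fun x => φ (j, x)) = range φ := by
    ext y
    simp [Prod.exists]
  refine ⟨fun j => range fun x => φ (j, x), fun i j hij => ?_, fun j => ?_, ?_, ?_⟩
  · rw [Function.onFun, disjoint_range_iff]
    exact fun x y hxy => hij (congrArg Prod.fst (hinj hxy))
  · exact isCantorSet_range (by fun_prop) (hinj.comp (Prod.mk_right_injective j))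
  · exact hunion ▸ hφd
  · rw [hunion]
    rintro _ ⟨p, rfl⟩ _ ⟨q, rfl⟩ hpq
    exact hφR (ne_of_apply_ne φ hpq)

end Mycielski

section WeaklyMixing

open Set TopologicalSpace Topology

/-- The set `N(U, V)` of times `m` at which the image of `U` under the `m`-th iterate of `f`
meets `V`; time `0` is included. -/
def hittingTimes {X : Type*} (f : X → X) (U V : Set X) : Set ℕ :=
  {m | (f^[m] '' U ∩ V).Nonempty}

theorem mem_hittingTimes {X : Type*} {f : X → X} {U V : Set X} {m : ℕ} :
    m ∈ hittingTimes f U V ↔ ∃ x ∈ U, f^[m] x ∈ V :=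
  image_inter_nonempty_iff

variable {X : Type*} [TopologicalSpace X] {f : X → X}

theorem WeaklyMixing.denseRange (hwm : WeaklyMixing f) : DenseRange f := by
  refine dense_iff_inter_open.2 fun U hU hUn => ?_
  obtain ⟨m, hm, hmU, -⟩ := hwm U U U U hU hU hU hU hUn hUn hUn hUn
  obtain ⟨m, rfl⟩ := Nat.exists_eq_add_of_le' hm
  obtain ⟨x, -, hx⟩ := mem_hittingTimes.1 hmU
  exact ⟨f^[m + 1] x, hx, f^[m] x, (Function.iterate_succ_apply' f m x).symm⟩

theorem denseRange_iterate (hf : Continuous f) (hd : DenseRange f) (n : ℕ) : DenseRange f^[n] := by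
  induction n with
  | zero => exact denseRange_id
  | succ n ih => exact ih.comp hd (hf.iterate n)

theorem WeaklyMixing.exists_hittingTimes_subset [Nonempty X] (hf : Continuous f)
    (hwm : WeaklyMixing f) {ι : Type*} (s : Finset ι) {U V : ι → Set X} (hU : ∀ i, IsOpen (U i))
    (hUn : ∀ i, (U i).Nonempty) (hV : ∀ i, IsOpen (V i)) (hVn : ∀ i, (V i).Nonempty) :
    ∃ P Q : Set X, IsOpen P ∧ P.Nonempty ∧ IsOpen Q ∧ Q.Nonempty ∧
      ∀ i ∈ s, hittingTimes f P Q ⊆ hittingTimes f (U i) (V i) := by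
  classical
  induction s using Finset.induction_on with
  | empty => exact ⟨univ, univ, isOpen_univ, univ_nonempty, isOpen_univ, univ_nonempty, by simp⟩
  | insert j s _ ih =>
    obtain ⟨P, Q, hP, hPn, hQ, hQn, hPQ⟩ := ih
    obtain ⟨k, -, hkP, hkQ⟩ := hwm P Q (U j) (V j) hP hQ (hU j) (hV j) hPn hQn (hUn j) (hVn j)
    refine ⟨P ∩ f^[k] ⁻¹' U j, Q ∩ f^[k] ⁻¹' V j, hP.inter ((hU j).preimage (hf.iterate k)),
      mem_hittingTimes.1 hkP, hQ.inter ((hV j).preimage (hf.iterate k)),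
      mem_hittingTimes.1 hkQ, ?_⟩
    rintro i hi m hm
    obtain ⟨x, ⟨hxP, hxU⟩, hxQ, hxV⟩ := mem_hittingTimes.1 hm
    rcases Finset.mem_insert.1 hi with rfl | hi
    · refine mem_hittingTimes.2 ⟨f^[k] x, hxU, ?_⟩
      rwa [(Function.Commute.iterate_iterate_self f m k).eq x]
    · exact hPQ i hi (mem_hittingTimes.2 ⟨x, hxP, hxQ⟩)

theorem WeaklyMixing.exists_forall_add_mem_hittingTimes [Nonempty X] (hf : Continuous f)
    (hwm : WeaklyMixing f) {U V : Set X} (hU : IsOpen U) (hUn : U.Nonempty) (hV : IsOpen V)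
    (hVn : V.Nonempty) (n : ℕ) :
    ∃ P Q : Set X, IsOpen P ∧ P.Nonempty ∧ IsOpen Q ∧ Q.Nonempty ∧
      ∀ m ∈ hittingTimes f P Q, ∀ i < n, i + m ∈ hittingTimes f U V := by
  obtain ⟨P, Q, hP, hPn, hQ, hQn, hPQ⟩ := hwm.exists_hittingTimes_subset hf (Finset.range n)
    (U := fun _ => U) (V := fun i => f^[i] ⁻¹' V) (fun _ => hU) (fun _ => hUn)
    (fun i => hV.preimage (hf.iterate i))
    fun i => (denseRange_iterate hf hwm.denseRange i).exists_mem_open hV hVn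
  refine ⟨P, Q, hP, hPn, hQ, hQn, fun m hm i hi => ?_⟩
  obtain ⟨x, hxU, hxV⟩ := mem_hittingTimes.1 (hPQ i (Finset.mem_range.2 hi) hm)
  exact mem_hittingTimes.2 ⟨x, hxU, by rwa [Function.iterate_add_apply]⟩

theorem WeaklyMixing.exists_mul_mem_hittingTimes [Nonempty X] (hf : Continuous f)
    (hwm : WeaklyMixing f) {n : ℕ} (hn : 1 ≤ n) {U₁ U₂ V₁ V₂ : Set X} (hU₁ : IsOpen U₁)
    (hU₁n : U₁.Nonempty) (hU₂ : IsOpen U₂) (hU₂n : U₂.Nonempty) (hV₁ : IsOpen V₁)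
    (hV₁n : V₁.Nonempty) (hV₂ : IsOpen V₂) (hV₂n : V₂.Nonempty) :
    ∃ k, n * k ∈ hittingTimes f U₁ V₁ ∩ hittingTimes f U₂ V₂ := by
  obtain ⟨P₁, Q₁, hP₁, hP₁n, hQ₁, hQ₁n, h₁⟩ :=
    hwm.exists_forall_add_mem_hittingTimes hf hU₁ hU₁n hV₁ hV₁n (n + 1)
  obtain ⟨P₂, Q₂, hP₂, hP₂n, hQ₂, hQ₂n, h₂⟩ :=
    hwm.exists_forall_add_mem_hittingTimes hf hU₂ hU₂n hV₂ hV₂n (n + 1)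
  obtain ⟨m, -, hm₁, hm₂⟩ := hwm P₁ P₂ Q₁ Q₂ hP₁ hP₂ hQ₁ hQ₂ hP₁n hP₂n hQ₁n hQ₂n
  obtain ⟨i, hi, k, hk⟩ : ∃ i < n + 1, ∃ k, i + m = n * k := by
    have := Nat.div_add_mod m n
    have := Nat.mod_lt m hn
    exact ⟨n - m % n, by omega, m / n + 1, by rw [mul_add]; omega⟩
  exact ⟨k, hk ▸ h₁ m hm₁ i hi, hk ▸ h₂ m hm₂ i hi⟩

end WeaklyMixing

namespace TotallyTransitivePoint

open Set TopologicalSpace Topology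

variable {Y Z : Type*} [TopologicalSpace Y] [TopologicalSpace Z] {g : Y → Y} {y : Y}

theorem eventually_residual [SecondCountableTopology Y] (hg : Continuous g)
    (h : ∀ n ≥ 1, ∀ W, IsOpen W → W.Nonempty → Dense (⋃ k, g^[n * k] ⁻¹' W)) :
    ∀ᶠ y in residual Y, TotallyTransitivePoint g y := by
  have hbasis : ∀ᶠ y in residual Y, ∀ n, n ≥ 1 → ∀ B ∈ countableBasis Y, ∃ k, g^[n * k] y ∈ B := by
    refine eventually_countable_forall.2 fun n => eventually_imp_distrib_left.2 fun hn =>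
      (eventually_countable_ball (countable_countableBasis Y)).2 fun B hB => ?_
    have hBo : IsOpen B := isOpen_of_mem_countableBasis hB
    filter_upwards [residual_of_dense_open (isOpen_iUnion fun k => hBo.preimage (hg.iterate _))
      (h n hn B hBo (nonempty_of_mem_countableBasis hB))] with y hy using mem_iUnion.1 hy
  filter_upwards [hbasis] with y hy n hn
  refine (isBasis_countableBasis Y).dense_iff.2 fun B hB _ => ?_
  obtain ⟨k, hk⟩ := hy n hn B hB
  exact ⟨_, hk, k, rfl⟩

theorem map {g' : Z → Z} {h : Y → Z} (hy : TotallyTransitivePoint g y)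
    (hsemi : Function.Semiconj h g g') (hh : Continuous h) (hd : DenseRange h) :
    TotallyTransitivePoint g' (h y) := by
  intro n hn
  have himage : h '' range (fun k => g^[n * k] y) = range fun k => g'^[n * k] (h y) := by
    rw [← range_comp]
    exact congrArg range (funext fun k => hsemi.iterate_right (n * k) y)
  exact himage ▸ hd.dense_image hh (hy n hn)

theorem iterate (hy : TotallyTransitivePoint g y) (hg : Continuous g) (hd : DenseRange g) (m : ℕ) :
    TotallyTransitivePoint g (g^[m] y) :=
  hy.map (Function.Commute.iterate_self g m) (hg.iterate m) (denseRange_iterate hg hd m)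

theorem frequently_mem (hy : TotallyTransitivePoint g y) (hg : Continuous g) (hd : DenseRange g)
    {n : ℕ} (hn : 1 ≤ n) {W : Set Y} (hW : IsOpen W) (hWn : W.Nonempty) :
    ∃ᶠ k in atTop, g^[n * k] y ∈ W := by
  refine frequently_atTop.2 fun M => ?_
  obtain ⟨_, hkW, k, rfl⟩ := (hy.iterate hg hd (n * M) n hn).inter_open_nonempty W hW hWn
  refine ⟨k + M, Nat.le_add_left M k, ?_⟩
  rwa [mul_add, Function.iterate_add_apply]

theorem iSup_le_limsup {E : Type*} [CompleteLinearOrder E] [DenselyOrdered E]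
    (hy : TotallyTransitivePoint g y) (hg : Continuous g) (hd : DenseRange g) {n : ℕ} (hn : 1 ≤ n)
    {F : Y → E} (hF : LowerSemicontinuous F) :
    ⨆ z, F z ≤ atTop.limsup fun k => F (g^[n * k] y) :=
  iSup_le fun z => le_of_forall_lt_imp_le_of_dense fun c hc => le_limsup_of_frequently_le' <|
    (hy.frequently_mem hg hd hn (hF.isOpen_preimage c) ⟨z, hc⟩).mono fun _ => le_of_lt

theorem liminf_le_iInf {E : Type*} [CompleteLinearOrder E] [DenselyOrdered E]
    (hy : TotallyTransitivePoint g y) (hg : Continuous g) (hd : DenseRange g) {n : ℕ} (hn : 1 ≤ n)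
    {F : Y → E} (hF : UpperSemicontinuous F) :
    atTop.liminf (fun k => F (g^[n * k] y)) ≤ ⨅ z, F z :=
  le_iInf fun z => le_of_forall_gt_imp_ge_of_dense fun c hc => liminf_le_of_frequently_le' <|
    (hy.frequently_mem hg hd hn (hF.isOpen_preimage c) ⟨z, hc⟩).mono fun _ => le_of_lt

variable {f : Y → Y} {a b : Y}

theorem prodMap_fst {g : Z → Z} {z : Z} (haz : TotallyTransitivePoint (Prod.map f g) (a, z)) :
    TotallyTransitivePoint f a :=
  have : Nonempty Z := ⟨z⟩
  haz.map (h := Prod.fst) (g' := f) (fun _ => rfl) continuous_fst Prod.fst_surjective.denseRange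

theorem prodMap_ne [T2Space Y] [Nontrivial Y]
    (hab : TotallyTransitivePoint (Prod.map f f) (a, b)) : a ≠ b := by
  rintro rfl
  have hdiag : range (fun k => (Prod.map f f)^[1 * k] (a, a)) ⊆ diagonal Y := by
    rintro _ ⟨k, rfl⟩
    simp [Prod.map_iterate]
  obtain ⟨x, y, hxy⟩ := exists_pair_ne Y
  exact hxy (closure_minimal hdiag isClosed_diagonal (hab 1 le_rfl (x, y)))

theorem prodMap_iterate (hab : TotallyTransitivePoint (Prod.map f f) (a, b)) (hf : Continuous f)
    (hd : DenseRange f) (i j : ℕ) :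
    TotallyTransitivePoint (Prod.map f f) (f^[i] a, f^[j] b) :=
  hab.map (h := Prod.map f^[i] f^[j])
    (fun x => Prod.ext ((Function.Commute.iterate_self f i).eq x.1)
      ((Function.Commute.iterate_self f j).eq x.2))
    ((hf.iterate i).prodMap (hf.iterate j))
    ((denseRange_iterate hf hd i).prodMap (denseRange_iterate hf hd j))

end TotallyTransitivePoint

theorem WeaklyMixing.eventually_residual_totallyTransitivePoint {X : Type*} [TopologicalSpace X]
    [SecondCountableTopology X] [Nonempty X] {f : X → X} (hf : Continuous f)
    (hwm : WeaklyMixing f) :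
    ∀ᶠ p in residual (X × X), TotallyTransitivePoint (Prod.map f f) p := by
  refine TotallyTransitivePoint.eventually_residual (hf.prodMap hf) fun n hn W hW hWn => ?_
  refine dense_iff_inter_open.2 fun U hU hUn => ?_
  obtain ⟨⟨u₁, u₂⟩, hu⟩ := hUn
  obtain ⟨⟨w₁, w₂⟩, hw⟩ := hWn
  obtain ⟨U₁, U₂, hU₁, hU₂, hu₁, hu₂, hUU⟩ := isOpen_prod_iff.1 hU u₁ u₂ hu
  obtain ⟨W₁, W₂, hW₁, hW₂, hw₁, hw₂, hWW⟩ := isOpen_prod_iff.1 hW w₁ w₂ hw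
  obtain ⟨k, hk₁, hk₂⟩ := hwm.exists_mul_mem_hittingTimes hf hn hU₁ ⟨u₁, hu₁⟩ hU₂ ⟨u₂, hu₂⟩
    hW₁ ⟨w₁, hw₁⟩ hW₂ ⟨w₂, hw₂⟩
  obtain ⟨x, hxU, hxW⟩ := mem_hittingTimes.1 hk₁
  obtain ⟨y, hyU, hyW⟩ := mem_hittingTimes.1 hk₂
  refine ⟨(x, y), hUU ⟨hxU, hyU⟩, Set.mem_iUnion.2 ⟨k, ?_⟩⟩
  rw [Set.mem_preimage, Prod.map_iterate]
  exact hWW ⟨hxW, hyW⟩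

section Scrambled

variable {X : Type*}

/-- The relation defining `η`-scrambled sets of `fⁿ`: a set is `η`-scrambled when any two
distinct points of it form a scrambled pair. Distances are extended, so that `η = ∞` expresses
unbounded separation. -/
def IsScrambledPair [EDist X] (η : ℝ≥0∞) (f : X → X) (n : ℕ) (a b : X) : Prop :=
  atTop.liminf (fun k : ℕ => edist (f^[n * k] a) (f^[n * k] b)) = 0 ∧
    η ≤ atTop.limsup fun k : ℕ => edist (f^[n * k] a) (f^[n * k] b)

variable [PseudoEMetricSpace X] {f : X → X} {n : ℕ} {η : ℝ≥0∞} {a b : X}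

theorem IsScrambledPair.symm (h : IsScrambledPair η f n a b) : IsScrambledPair η f n b a := by
  simpa only [IsScrambledPair, edist_comm] using h

theorem IsScrambledPair.mono {η' : ℝ≥0∞} (h : IsScrambledPair η f n a b) (hη : η' ≤ η) :
    IsScrambledPair η' f n a b :=
  ⟨h.1, hη.trans h.2⟩

theorem TotallyTransitivePoint.isScrambledPair
    (hab : TotallyTransitivePoint (Prod.map f f) (a, b)) (hf : Continuous f) (hd : DenseRange f)
    (hn : 1 ≤ n) : IsScrambledPair (Metric.ediam (Set.univ : Set X)) f n a b := by
  have hcoord (k : ℕ) : (Prod.map f f)^[n * k] (a, b) = (f^[n * k] a, f^[n * k] b) :=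
    congrFun (Prod.map_iterate f f (n * k)) (a, b)
  have hliminf := hab.liminf_le_iInf (hf.prodMap hf) (hd.prodMap hd) hn
    continuous_edist.upperSemicontinuous
  have hlimsup := hab.iSup_le_limsup (hf.prodMap hf) (hd.prodMap hd) hn
    continuous_edist.lowerSemicontinuous
  simp only [hcoord] at hliminf hlimsup
  refine ⟨nonpos_iff_eq_zero.1 (hliminf.trans ?_), le_trans ?_ hlimsup⟩
  · exact iInf_le_of_le (a, a) (edist_self a).le
  · exact Metric.ediam_le fun x _ y _ => le_iSup (fun p : X × X => edist p.1 p.2) (x, y)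

theorem TotallyTransitivePoint.isScrambledPair_iterate_self (ha : TotallyTransitivePoint f a)
    (hf : Continuous f) (hd : DenseRange f) (hn : 1 ≤ n) {l : ℕ}
    (hinf : ⨅ x, edist (f^[l] x) x = 0) :
    IsScrambledPair (⨆ x, edist (f^[l] x) x) f n (f^[l] a) a := by
  have hcomm (k : ℕ) : f^[n * k] (f^[l] a) = f^[l] (f^[n * k] a) :=
    (Function.Commute.iterate_iterate_self f (n * k) l).eq a
  have hcont : Continuous fun x => edist (f^[l] x) x := (hf.iterate l).edist continuous_id
  simp only [IsScrambledPair, hcomm]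
  exact ⟨nonpos_iff_eq_zero.1 (hinf ▸ ha.liminf_le_iInf hf hd hn hcont.upperSemicontinuous),
    ha.iSup_le_limsup hf hd hn hcont.lowerSemicontinuous⟩

theorem TotallyTransitivePoint.isScrambledPair_iterate_iterate (ha : TotallyTransitivePoint f a)
    (hf : Continuous f) (hd : DenseRange f) (hn : 1 ≤ n)
    (hinf : ∀ l, ⨅ x, edist (f^[l] x) x = 0) (hη : ∀ l ≥ 1, η ≤ ⨆ x, edist (f^[l] x) x)
    {i j : ℕ} (hij : i ≠ j) : IsScrambledPair η f n (f^[i] a) (f^[j] a) := by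
  wlog hlt : j < i generalizing i j
  · exact (this hij.symm (by omega)).symm
  obtain ⟨l, rfl⟩ := Nat.exists_eq_add_of_le' hlt.le
  rw [Function.iterate_add_apply]
  exact ((ha.iterate hf hd j).isScrambledPair_iterate_self hf hd hn (hinf l)).mono
    (hη l (by omega))

theorem iSup_edist_le_ediam_univ (g : X → X) :
    ⨆ x, edist (g x) x ≤ Metric.ediam (Set.univ : Set X) :=
  iSup_le fun _ => Metric.edist_le_ediam_of_mem trivial trivial

theorem isScrambledPair_of_mem_iUnion_image_iterate {S : Set X} (hf : Continuous f)
    (hd : DenseRange f) (hS : ∀ a ∈ S, TotallyTransitivePoint f a)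
    (hpair : S.Pairwise fun a b => TotallyTransitivePoint (Prod.map f f) (a, b))
    (hinf : ∀ l, ⨅ x, edist (f^[l] x) x = 0) (hη : ∀ l ≥ 1, η ≤ ⨆ x, edist (f^[l] x) x)
    (hn : 1 ≤ n) {c d : X} (hcS : c ∈ ⋃ i, f^[i] '' S) (hdS : d ∈ ⋃ i, f^[i] '' S) (hcd : c ≠ d) :
    IsScrambledPair η f n c d := by
  obtain ⟨i, a, ha, rfl⟩ := Set.mem_iUnion.1 hcS
  obtain ⟨j, b, hb, rfl⟩ := Set.mem_iUnion.1 hdS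
  rcases eq_or_ne a b with rfl | hab
  · exact (hS a ha).isScrambledPair_iterate_iterate hf hd hn hinf hη
      (ne_of_apply_ne (f^[·] a) hcd)
  · exact (((hpair ha hb hab).prodMap_iterate hf hd i j).isScrambledPair hf hd hn).mono
      ((hη 1 le_rfl).trans (iSup_edist_le_ediam_univ _))

end Scrambled

theorem subset_iUnion_image_iterate {X : Type*} (f : X → X) (S : Set X) :
    S ⊆ ⋃ i : ℕ, f^[i] '' S :=
  fun a ha => Set.mem_iUnion.2 ⟨0, a, ha, rfl⟩

theorem image_iUnion_image_iterate_subset {X : Type*} (f : X → X) (S : Set X) :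
    f '' (⋃ i : ℕ, f^[i] '' S) ⊆ ⋃ i : ℕ, f^[i] '' S := by
  rintro _ ⟨_, hc, rfl⟩
  obtain ⟨i, a, ha, rfl⟩ := Set.mem_iUnion.1 hc
  exact Set.mem_iUnion.2 ⟨i + 1, a, ha, Function.iterate_succ_apply' f i a⟩

theorem WeaklyMixing.exists_isCantorSet_pairwise_totallyTransitivePoint {X : Type*}
    [TopologicalSpace X] [PolishSpace X] [Nontrivial X] {f : X → X} (hf : Continuous f)
    (hwm : WeaklyMixing f) :
    ∃ S : ℕ → Set X, Pairwise (Function.onFun Disjoint S) ∧ (∀ j, IsCantorSet (S j)) ∧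
      (∀ j, ∀ a ∈ S j, TotallyTransitivePoint f a) ∧ Dense (⋃ j, S j) ∧
      (⋃ j, S j).Pairwise fun a b => TotallyTransitivePoint (Prod.map f f) (a, b) := by
  obtain ⟨S, hdisj, hcantor, hdense, hpair⟩ := exists_isCantorSet_pairwise_mem
    (hwm.eventually_residual_totallyTransitivePoint hf) fun x hx =>
      TotallyTransitivePoint.prodMap_ne hx rfl
  refine ⟨S, hdisj, hcantor, fun j a ha => ?_, hdense, hpair⟩
  obtain ⟨b, ⟨-, hb⟩, hba⟩ :=
    accPt_iff_nhds.1 ((hcantor j).2.2.1.acc a ha) Set.univ univ_mem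
  exact (hpair (Set.mem_iUnion_of_mem j ha) (Set.mem_iUnion_of_mem j hb) hba.symm).prodMap_fst

theorem iInf_edist_iterate_eq_zero {X : Type*} [PseudoEMetricSpace X] {f : X → X} {z : X}
    (hz : f z = z) (l : ℕ) : ⨅ x, edist (f^[l] x) x = 0 :=
  nonpos_iff_eq_zero.1 <| iInf_le_of_le z <| by rw [Function.iterate_fixed hz, edist_self]

theorem invariant_delta_scrambled_of_weaklyMixing_with_fixed_point_general
    {X : Type*} [EMetricSpace X] [PolishSpace X] [Nontrivial X] {f : X → X}
    (hf : Continuous f) (hwm : WeaklyMixing f) (hinf : ∀ l, ⨅ x, edist (f^[l] x) x = 0) :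
    ∃ S : ℕ → Set X,
      (∀ i j, i ≠ j → Disjoint (S i) (S j)) ∧
      (∀ j, IsCantorSet (S j)) ∧
      (∀ j, ∀ a ∈ S j, TotallyTransitivePoint f a) ∧
      Dense (⋃ j, S j) ∧
      (∀ n : ℕ, 1 ≤ n → ∀ a ∈ ⋃ j, S j, ∀ b ∈ ⋃ j, S j, a ≠ b →
        IsScrambledPair (Metric.ediam (Set.univ : Set X)) f n a b) ∧
      Dense (⋃ i : ℕ, f^[i] '' (⋃ j, S j)) ∧
      f '' (⋃ i : ℕ, f^[i] '' (⋃ j, S j)) ⊆ ⋃ i : ℕ, f^[i] '' (⋃ j, S j) ∧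
      (∀ n : ℕ, 1 ≤ n →
        ∀ c ∈ ⋃ i : ℕ, f^[i] '' (⋃ j, S j), ∀ d ∈ ⋃ i : ℕ, f^[i] '' (⋃ j, S j), c ≠ d →
          IsScrambledPair (⨅ (n : ℕ) (_ : 1 ≤ n), ⨆ x : X, edist (f^[n] x) x) f n c d) := by
  have hd : DenseRange f := hwm.denseRange
  obtain ⟨S, hdisj, hcantor, htrans, hdense, hpair⟩ :=
    hwm.exists_isCantorSet_pairwise_totallyTransitivePoint hf
  have htrans' : ∀ a ∈ ⋃ j, S j, TotallyTransitivePoint f a := fun a ha =>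
    let ⟨j, haj⟩ := Set.mem_iUnion.1 ha
    htrans j a haj
  refine ⟨S, fun i j hij => hdisj hij, hcantor, htrans, hdense,
    fun n hn a ha b hb hab => (hpair ha hb hab).isScrambledPair hf hd hn,
    hdense.mono (subset_iUnion_image_iterate f _), image_iUnion_image_iterate_subset f _,
    fun n hn c hcS d hdS hcd => ?_⟩
  exact isScrambledPair_of_mem_iUnion_image_iterate hf hd htrans' hpair hinf
    iInf₂_le hn hcS hdS hcd

theorem invariant_delta_scrambled_of_weaklyMixing_with_fixed_point
    {X : Type*} [MetricSpace X] [Infinite X]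
    [TopologicalSpace.SeparableSpace X] [LocallyCompactSpace X]
    (f : X → X) (hf : Continuous f) (hwm : WeaklyMixing f)
    (hfix : ∃ z : X, f z = z)
    (β : ℝ≥0∞) (hβ : β = EMetric.diam (Set.univ : Set X))
    (δ : ℝ≥0∞) (hδ : δ = ⨅ (n : ℕ) (_ : 1 ≤ n), ⨆ x : X, edist (f^[n] x) x) :
    ∃ S : ℕ → Set X,
      (∀ i j, i ≠ j → Disjoint (S i) (S j)) ∧
      (∀ j, IsCantorSet (S j)) ∧
      (∀ j, ∀ a ∈ S j, TotallyTransitivePoint f a) ∧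
      Dense (⋃ j, S j) ∧
      (∀ n : ℕ, 1 ≤ n → ∀ a ∈ ⋃ j, S j, ∀ b ∈ ⋃ j, S j, a ≠ b →
        atTop.liminf (fun k : ℕ => edist (f^[n * k] a) (f^[n * k] b)) = 0 ∧
        β ≤ atTop.limsup (fun k : ℕ => edist (f^[n * k] a) (f^[n * k] b))) ∧
      Dense (⋃ i : ℕ, f^[i] '' (⋃ j, S j)) ∧
      f '' (⋃ i : ℕ, f^[i] '' (⋃ j, S j)) ⊆ ⋃ i : ℕ, f^[i] '' (⋃ j, S j) ∧
      (∀ n : ℕ, 1 ≤ n →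
        ∀ c ∈ ⋃ i : ℕ, f^[i] '' (⋃ j, S j), ∀ d ∈ ⋃ i : ℕ, f^[i] '' (⋃ j, S j), c ≠ d →
          atTop.liminf (fun k : ℕ => edist (f^[n * k] c) (f^[n * k] d)) = 0 ∧
          δ ≤ atTop.limsup (fun k : ℕ => edist (f^[n * k] c) (f^[n * k] d))) := by
  obtain ⟨z, hz⟩ := hfix
  have : PolishSpace X := polishSpace_of_locallyCompactSpace
  subst hβ hδ
  exact invariant_delta_scrambled_of_weaklyMixing_with_fixed_point_general hf hwm
    (iInf_edist_iterate_eq_zero hz)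
end

section
/- Let X be an infinite separable locally compact metric space without isolated points and let f : X → X be a continuous topologically mixing map. Then δ = inf_{n≥1} sup_{x∈X} ρ(fⁿ(x), x) > 0; in particular, f is not uniformly rigid. -/
open Filter ENNReal

/-- `f` is (topologically) mixing. -/
def TopMixing {X : Type*} [TopologicalSpace X] (f : X → X) : Prop :=
  ∀ U V : Set X, IsOpen U → IsOpen V → U.Nonempty → V.Nonempty →
    ∃ N : ℕ, ∀ n : ℕ, N ≤ n → (f^[n] '' U ∩ V).Nonempty

/-!
If every point moves by at most `C` under `g = fⁿ`, then every point moves by at most `k * C` under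
`gᵏ`. A mixing map sends, for all large `m`, some point near `a` close to `b`, so `fᵐ` moves some
point by more than a fixed `r > 0`. Taking `m = n * N` for a fixed large `N` bounds the displacement
of `fⁿ` below by `r / N`, uniformly in `n ≥ 1`.
-/

theorem TopMixing.eventually_exists_mem_graph {X : Type*} [TopologicalSpace X] {f : X → X}
    (hmix : TopMixing f) {W : Set (X × X)} (hW : IsOpen W) (hne : W.Nonempty) :
    ∀ᶠ n in atTop, ∃ x, (x, f^[n] x) ∈ W := by
  obtain ⟨⟨a, b⟩, hab⟩ := hne
  obtain ⟨U, V, hU, hV, haU, hbV, hUV⟩ := isOpen_prod_iff.1 hW a b hab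
  obtain ⟨N, hN⟩ := hmix U V hU hV ⟨a, haU⟩ ⟨b, hbV⟩
  filter_upwards [eventually_ge_atTop N] with n hn
  obtain ⟨_, ⟨x, hxU, rfl⟩, hxV⟩ := hN n hn
  exact ⟨x, hUV ⟨hxU, hxV⟩⟩

section PseudoEMetricSpace

variable {X : Type*} [PseudoEMetricSpace X] {f : X → X}

theorem edist_iterate_self_le {C : ℝ≥0∞} (hC : ∀ x, edist (f x) x ≤ C) (k : ℕ) (x : X) :
    edist (f^[k] x) x ≤ k * C := by
  have hstep (i : ℕ) : edist (f^[i] x) (f^[i + 1] x) ≤ C := by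
    rw [edist_comm, Function.iterate_succ_apply']
    exact hC _
  calc edist (f^[k] x) x = edist (f^[0] x) (f^[k] x) := edist_comm _ _
    _ ≤ ∑ _i ∈ Finset.range k, C := edist_le_range_sum_of_edist_le k fun {i} _ ↦ hstep i
    _ = k * C := by rw [Finset.sum_const, Finset.card_range, nsmul_eq_mul]

theorem iInf_iSup_edist_iterate_pos_of_eventually_exists_le {r : ℝ≥0∞} (hr : 0 < r)
    (h : ∀ᶠ n in atTop, ∃ x, r ≤ edist (f^[n] x) x) :
    0 < ⨅ (n : ℕ) (_ : 1 ≤ n), ⨆ x : X, edist (f^[n] x) x := by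
  obtain ⟨N, hN⟩ := eventually_atTop.1 h
  refine (ENNReal.div_pos hr.ne' (natCast_ne_top N)).trans_le (le_iInf₂ fun n hn ↦ ?_)
  obtain ⟨x, hx⟩ := hN (n * N) (Nat.le_mul_of_pos_left N hn)
  refine ENNReal.div_le_of_le_mul' ?_
  calc r ≤ edist ((f^[n])^[N] x) x := by rwa [← Function.iterate_mul]
    _ ≤ N * ⨆ y, edist (f^[n] y) y :=
      edist_iterate_self_le (le_iSup fun y ↦ edist (f^[n] y) y) N x

theorem TopMixing.eventually_exists_lt_edist (hmix : TopMixing f) {r : ℝ≥0∞} {a b : X}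
    (hr : r < edist a b) : ∀ᶠ n in atTop, ∃ x, r < edist (f^[n] x) x :=
  hmix.eventually_exists_mem_graph (W := {p | r < edist p.2 p.1})
    (isOpen_lt (by fun_prop) (by fun_prop)) ⟨(b, a), hr⟩

theorem not_uniformly_rigid_of_mixing_general [NontrivialTopology X] (hmix : TopMixing f) :
    0 < ⨅ (n : ℕ) (_ : 1 ≤ n), ⨆ x : X, edist (f^[n] x) x := by
  obtain ⟨a, b, hab⟩ := ‹NontrivialTopology X›.exists_not_inseparable
  have hpos : 0 < edist a b := pos_iff_ne_zero.2 (EMetric.inseparable_iff.not.1 hab)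
  obtain ⟨r, hr, hrab⟩ := exists_between hpos
  exact iInf_iSup_edist_iterate_pos_of_eventually_exists_le hr
    ((hmix.eventually_exists_lt_edist hrab).mono fun _ ⟨x, hx⟩ ↦ ⟨x, hx.le⟩)

end PseudoEMetricSpace

theorem not_uniformly_rigid_of_mixing {X : Type*} [MetricSpace X] [Infinite X]
    [TopologicalSpace.SeparableSpace X] [LocallyCompactSpace X]
    (hiso : ∀ x : X, ¬ IsOpen ({x} : Set X))
    (f : X → X) (hf : Continuous f) (hmix : TopMixing f) :
    0 < ⨅ (n : ℕ) (_ : 1 ≤ n), ⨆ x : X, edist (f^[n] x) x :=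
  not_uniformly_rigid_of_mixing_general hmix
end
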